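/- Let Σ ⊂ ℂ be a finite set, let O_Σ = ℂ[z, (z−a)⁻¹ : a ∈ Σ], let M be the free O_Σ-module on the set Σ* of words over Σ, and let ∂_z : M → M be the ℂ-linear map with ∂_z(e⊗φ) = e⊗φ′ and ∂_z(wa⊗φ) = wa⊗φ′ + w⊗(φ/(z−a)). Then the sequence 0 → ℂ → M → M → 0 (with ℂ → M the map c ↦ e⊗c and M → M the map ∂_z) is exact: the kernel of ∂_z equals {e⊗c : c ∈ ℂ}, and ∂_z is surjective, i.e. every f ∈ M admits a primitive F ∈ M with ∂_z F = f. -/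

import Mathlib

/-! The proof rests on two facts about rational functions. Write `φ'` for `rderiv φ`.

* No logarithms are exact: if `φ' + ∑ c_a / (z - a) = 0` then every `c_a` vanishes, because a
  derivative has no residues (`log_independent`, from `residue_eq_zero`). Also `φ' = 0` forces `φ`
  to be constant (`rderiv_eq_zero`).
* Everything else is exact: by partial fractions (`ratO_le_parFrac`) every element of `O_Σ` is of
  the form `ψ' + ∑ c_a / (z - a)` with `ψ ∈ O_Σ` (`exists_primitive_mod_log`).

For the kernel, the coefficient of `w` in `∂_z x` is `(x_w)' + ∑ x_{wa} / (z - a)` (`D_apply`). If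
`∂_z x = 0`, the coefficients of `x` on words of maximal length are constants, and the equation at
the words one letter shorter shows that these constants vanish unless the length is zero.

For surjectivity, induct on the length of `w`. Writing `φ = ψ' + ∑ c_a / (z - a)`, the element
`w⊗ψ + ∑ wa⊗c_a` is a primitive of `w⊗φ` up to an error term supported on the word obtained from
`w` by dropping its last letter, which has a primitive by induction. -/

/-- The derivative of a rational function `φ = num/denom`, namely
`φ' = (num'·denom − num·denom')/denom²`. -/
noncomputable def rderiv (f : RatFunc ℂ) : RatFunc ℂ :=
  algebraMap (Polynomial ℂ) (RatFunc ℂ)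
      (Polynomial.derivative f.num * f.denom - f.num * Polynomial.derivative f.denom)
    / algebraMap (Polynomial ℂ) (RatFunc ℂ) (f.denom ^ 2)

/-- `O_Σ = ℂ[z, (z−a)⁻¹ : a ∈ Σ]`, the subalgebra of the field of rational
functions generated by `z` and `(z−a)⁻¹` for `a ∈ Σ`. -/
noncomputable def ratO (S : Finset ℂ) : Subalgebra ℂ (RatFunc ℂ) :=
  Algebra.adjoin ℂ
    (insert RatFunc.X ((fun a : ℂ => (RatFunc.X - RatFunc.C a)⁻¹) '' (S : Set ℂ)))

/-- Words over the alphabet `Σ`. -/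
abbrev Word (S : Finset ℂ) := List {a : ℂ // a ∈ S}

/-- The free module on the set of words over `Σ` with rational-function
coefficients; its elements with all coefficients in `O_Σ` form the free
`O_Σ`-module `M` on `Σ*`. -/
abbrev Mdl (S : Finset ℂ) := Word S →₀ RatFunc ℂ

/-! ### The derivative of rational functions -/

/-- The quotient rule holds for an arbitrary fraction, not only for the reduced one. -/
lemma rderiv_div (p q : Polynomial ℂ) (hq : q ≠ 0) :
    rderiv (algebraMap (Polynomial ℂ) (RatFunc ℂ) p / algebraMap (Polynomial ℂ) (RatFunc ℂ) q) =
      algebraMap (Polynomial ℂ) (RatFunc ℂ)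
        (Polynomial.derivative p * q - p * Polynomial.derivative q)
      / algebraMap (Polynomial ℂ) (RatFunc ℂ) (q ^ 2) := by
  obtain ⟨f, hf⟩ : ∃ f, f = algebraMap (Polynomial ℂ) (RatFunc ℂ) p /
    algebraMap (Polynomial ℂ) (RatFunc ℂ) q := ⟨_, rfl⟩
  rw [← hf]
  have hd : f.denom ≠ 0 := RatFunc.denom_ne_zero f
  have hq' := RatFunc.algebraMap_ne_zero hq
  have hd' := RatFunc.algebraMap_ne_zero hd
  have h1 : f.num * q = p * f.denom := by
    apply RatFunc.algebraMap_injective ℂ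
    have h := (RatFunc.num_div_denom f).trans hf
    rw [div_eq_div_iff hd' hq'] at h
    rw [map_mul, map_mul]
    exact h
  have h2 := congrArg Polynomial.derivative h1
  simp only [Polynomial.derivative_mul] at h2
  unfold rderiv
  rw [div_eq_div_iff (RatFunc.algebraMap_ne_zero (pow_ne_zero 2 hd))
    (RatFunc.algebraMap_ne_zero (pow_ne_zero 2 hq)), ← map_mul, ← map_mul]
  refine congrArg _ ?_
  linear_combination (f.denom * q) * h2 -
    (Polynomial.derivative q * f.denom + Polynomial.derivative f.denom * q) * h1

lemma rderiv_algebraMap (p : Polynomial ℂ) :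
    rderiv (algebraMap (Polynomial ℂ) (RatFunc ℂ) p) =
      algebraMap (Polynomial ℂ) (RatFunc ℂ) (Polynomial.derivative p) := by
  have := rderiv_div p 1 one_ne_zero
  simpa using this

lemma rderiv_add (f g : RatFunc ℂ) : rderiv (f + g) = rderiv f + rderiv g := by
  have hf := RatFunc.denom_ne_zero f
  have hg := RatFunc.denom_ne_zero g
  have hf' := RatFunc.algebraMap_ne_zero hf
  have hg' := RatFunc.algebraMap_ne_zero hg
  have h : f + g = algebraMap (Polynomial ℂ) (RatFunc ℂ) (f.num * g.denom + f.denom * g.num) /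
      algebraMap (Polynomial ℂ) (RatFunc ℂ) (f.denom * g.denom) := by
    conv_lhs => rw [← RatFunc.num_div_denom f, ← RatFunc.num_div_denom g]
    rw [div_add_div _ _ hf' hg']
    simp
  rw [h, rderiv_div _ _ (mul_ne_zero hf hg)]
  unfold rderiv
  simp only [map_mul, map_add, map_sub, map_pow, Polynomial.derivative_mul]
  field_simp
  ring

lemma rderiv_C (c : ℂ) : rderiv (RatFunc.C c) = 0 := by
  rw [← RatFunc.algebraMap_C, rderiv_algebraMap]
  simp

lemma rderiv_zero : rderiv 0 = 0 := by
  simpa using rderiv_C 0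

lemma rderiv_C_mul (c : ℂ) (f : RatFunc ℂ) : rderiv (RatFunc.C c * f) = RatFunc.C c * rderiv f := by
  have hf := RatFunc.denom_ne_zero f
  have h : RatFunc.C c * f = algebraMap (Polynomial ℂ) (RatFunc ℂ) (Polynomial.C c * f.num) /
      algebraMap (Polynomial ℂ) (RatFunc ℂ) f.denom := by
    conv_lhs => rw [← RatFunc.num_div_denom f]
    rw [map_mul, RatFunc.algebraMap_C, mul_div_assoc]
  rw [h, rderiv_div _ _ hf]
  unfold rderiv
  rw [← RatFunc.algebraMap_C, ← mul_div_assoc, ← map_mul]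
  congr 2
  simp only [Polynomial.derivative_mul, Polynomial.derivative_C]
  ring

lemma X_sub_C_eq (a : ℂ) : (RatFunc.X - RatFunc.C a : RatFunc ℂ) =
    algebraMap (Polynomial ℂ) (RatFunc ℂ) (Polynomial.X - Polynomial.C a) := by
  simp

lemma X_sub_C_ne (a : ℂ) : (RatFunc.X - RatFunc.C a : RatFunc ℂ) ≠ 0 := by
  rw [X_sub_C_eq]
  exact RatFunc.algebraMap_ne_zero (Polynomial.X_sub_C_ne_zero a)

lemma rderiv_X_pow (n : ℕ) :
    rderiv (RatFunc.X ^ (n + 1)) = RatFunc.C ((n : ℂ) + 1) * RatFunc.X ^ n := by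
  have := rderiv_algebraMap (Polynomial.X ^ (n + 1))
  simpa [Polynomial.derivative_X_pow] using this

lemma rderiv_inv_pow (a : ℂ) (n : ℕ) :
    rderiv ((RatFunc.X - RatFunc.C a)⁻¹ ^ (n + 1)) =
      RatFunc.C (-((n : ℂ) + 1)) * (RatFunc.X - RatFunc.C a)⁻¹ ^ (n + 2) := by
  have h := rderiv_div 1 ((Polynomial.X - Polynomial.C a) ^ (n + 1))
    (pow_ne_zero _ (Polynomial.X_sub_C_ne_zero a))
  have h0 := X_sub_C_ne a
  have e : (RatFunc.X - RatFunc.C a : RatFunc ℂ)⁻¹ ^ (n + 1) =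
      algebraMap (Polynomial ℂ) (RatFunc ℂ) 1 /
        algebraMap (Polynomial ℂ) (RatFunc ℂ) ((Polynomial.X - Polynomial.C a) ^ (n + 1)) := by
    rw [map_pow, ← X_sub_C_eq]; simp
  rw [e, h, Polynomial.derivative_X_sub_C_pow]
  simp only [map_pow, map_mul, map_sub, map_one, RatFunc.algebraMap_C, RatFunc.algebraMap_X,
    map_zero, inv_pow, map_neg, map_add, map_natCast, Polynomial.derivative_one, Nat.add_sub_cancel, Nat.cast_add,
    Nat.cast_one]
  field_simp
  ring

/-! ### Constants and residues -/

/-- With `φ = p/q` reduced, `φ' = 0` gives `q ∣ q'`, so `q` and then `p` are constant. -/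
lemma rderiv_eq_zero {f : RatFunc ℂ} (h : rderiv f = 0) : ∃ c : ℂ, f = RatFunc.C c := by
  have hd := RatFunc.denom_ne_zero f
  have h1 : Polynomial.derivative f.num * f.denom - f.num * Polynomial.derivative f.denom = 0 := by
    unfold rderiv at h
    rw [div_eq_zero_iff] at h
    rcases h with h | h
    · exact RatFunc.algebraMap_injective ℂ (by simpa using h)
    · exact absurd h (RatFunc.algebraMap_ne_zero (pow_ne_zero 2 hd))
  have hdvd : f.denom ∣ Polynomial.derivative f.denom := by
    apply (RatFunc.isCoprime_num_denom f).symm.dvd_of_dvd_mul_left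
    exact ⟨Polynomial.derivative f.num, by linear_combination -h1⟩
  have hq' : Polynomial.derivative f.denom = 0 := by
    by_contra hne
    exact Polynomial.not_dvd_of_degree_lt hne (Polynomial.degree_derivative_lt hd) hdvd
  have hp' : Polynomial.derivative f.num = 0 := by
    rw [hq', mul_zero, sub_zero] at h1
    exact (mul_eq_zero.1 h1).resolve_right hd
  have e1 := Polynomial.eq_C_of_derivative_eq_zero hp'
  have e2 := Polynomial.eq_C_of_derivative_eq_zero hq'
  refine ⟨f.num.coeff 0 / f.denom.coeff 0, ?_⟩
  conv_lhs => rw [← RatFunc.num_div_denom f, e1, e2]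
  rw [RatFunc.algebraMap_C, RatFunc.algebraMap_C, map_div₀]

/-- The derivative of a rational function has no residue: at `a`, if the reduced denominator
has order `m > 0`, then `φ'` has a pole of exact order `m + 1 ≥ 2`, and if `m = 0` it has none. -/
lemma residue_eq_zero {f : RatFunc ℂ} {a c : ℂ} {R T : Polynomial ℂ} (hT : T.eval a ≠ 0)
    (h : rderiv f = RatFunc.C c / (RatFunc.X - RatFunc.C a) +
      algebraMap (Polynomial ℂ) (RatFunc ℂ) R / algebraMap (Polynomial ℂ) (RatFunc ℂ) T) :
    c = 0 := by
  have hd := RatFunc.denom_ne_zero f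
  have hT0 : T ≠ 0 := by rintro rfl; simp at hT
  have hcop := RatFunc.isCoprime_num_denom f
  have h1 : (Polynomial.derivative f.num * f.denom - f.num * Polynomial.derivative f.denom) *
      ((Polynomial.X - Polynomial.C a) * T) =
      (Polynomial.C c * T + (Polynomial.X - Polynomial.C a) * R) * f.denom ^ 2 := by
    unfold rderiv at h
    rw [X_sub_C_eq, ← RatFunc.algebraMap_C, div_add_div _ _
      (RatFunc.algebraMap_ne_zero (Polynomial.X_sub_C_ne_zero a)) (RatFunc.algebraMap_ne_zero hT0),
      ← map_mul, ← map_mul, ← map_mul, ← map_add,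
      div_eq_div_iff (RatFunc.algebraMap_ne_zero (pow_ne_zero 2 hd))
      (RatFunc.algebraMap_ne_zero (mul_ne_zero (Polynomial.X_sub_C_ne_zero a) hT0)),
      ← map_mul, ← map_mul] at h
    exact RatFunc.algebraMap_injective ℂ h
  generalize f.num = p at *
  generalize f.denom = q at *
  obtain ⟨r, hr, hndvd⟩ := Polynomial.exists_eq_pow_rootMultiplicity_mul_and_not_dvd q hd a
  generalize Polynomial.rootMultiplicity a q = m at *
  rw [Polynomial.dvd_iff_isRoot, Polynomial.IsRoot] at hndvd
  rcases m with _ | k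
  · have h2 := congrArg (Polynomial.eval a) h1
    have hqr : q = r := by simpa using hr
    simp only [hqr, Polynomial.eval_mul, Polynomial.eval_sub, Polynomial.eval_X, Polynomial.eval_C,
      sub_self, zero_mul, mul_zero, Polynomial.eval_add, add_zero, Polynomial.eval_pow] at h2
    simpa [hT, hndvd] using h2.symm
  · exfalso
    have hpa : p.eval a ≠ 0 := by
      intro hpa
      obtain ⟨u, v, huv⟩ := hcop
      have := congrArg (Polynomial.eval a) huv
      simp [hr, hpa] at this
    have h2 : (Polynomial.X - Polynomial.C a) ^ (k + 1) *
        ((Polynomial.derivative p * (Polynomial.X - Polynomial.C a) * r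
          - Polynomial.C ((k : ℂ) + 1) * p * r
          - p * (Polynomial.X - Polynomial.C a) * Polynomial.derivative r) * T) =
        (Polynomial.X - Polynomial.C a) ^ (k + 1) * ((Polynomial.X - Polynomial.C a) ^ (k + 1) *
          (Polynomial.C c * T + (Polynomial.X - Polynomial.C a) * R) * r ^ 2) := by
      have hq' : Polynomial.derivative q = Polynomial.C ((k : ℂ) + 1) *
          (Polynomial.X - Polynomial.C a) ^ k * r +
          (Polynomial.X - Polynomial.C a) ^ (k + 1) * Polynomial.derivative r := by
        rw [hr, Polynomial.derivative_mul, Polynomial.derivative_X_sub_C_pow]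
        simp
      rw [hq', hr] at h1
      linear_combination h1
    have h3 := congrArg (Polynomial.eval a)
      (mul_left_cancel₀ (pow_ne_zero _ (Polynomial.X_sub_C_ne_zero a)) h2)
    have hk : (k : ℂ) + 1 ≠ 0 := by exact_mod_cast k.succ_ne_zero
    simp [hpa, hndvd, hT, hk] at h3

/-- The logarithmic forms `1/(z-a)` are linearly independent modulo exact ones. -/
lemma log_independent {S : Finset ℂ} {f : RatFunc ℂ} {c : {a : ℂ // a ∈ S} → ℂ}
    (h : rderiv f + ∑ A, RatFunc.C (c A) / (RatFunc.X - RatFunc.C (A : ℂ)) = 0) (A) : c A = 0 := by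
  classical
  -- the terms away from `A` have a common denominator which does not vanish at `A`
  have key : ∀ t : Finset {a : ℂ // a ∈ S}, A ∉ t → ∃ R T : Polynomial ℂ, T.eval (A : ℂ) ≠ 0 ∧
      ∑ B ∈ t, RatFunc.C (c B) / (RatFunc.X - RatFunc.C (B : ℂ)) =
      algebraMap (Polynomial ℂ) (RatFunc ℂ) R / algebraMap (Polynomial ℂ) (RatFunc ℂ) T := by
    intro t
    induction t using Finset.induction_on with
    | empty => intro _; exact ⟨0, 1, by simp, by simp⟩
    | insert B t hB ih =>
      intro hA
      rw [Finset.mem_insert, not_or] at hA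
      obtain ⟨R, T, hT, e⟩ := ih hA.2
      have hT0 : T ≠ 0 := by rintro rfl; simp at hT
      refine ⟨Polynomial.C (c B) * T + (Polynomial.X - Polynomial.C (B : ℂ)) * R,
        (Polynomial.X - Polynomial.C (B : ℂ)) * T, ?_, ?_⟩
      · simp only [Polynomial.eval_mul, Polynomial.eval_sub, Polynomial.eval_X, Polynomial.eval_C]
        refine mul_ne_zero (sub_ne_zero.2 fun h => hA.1 (Subtype.ext h)) hT
      · rw [Finset.sum_insert hB, e, X_sub_C_eq, ← RatFunc.algebraMap_C, div_add_div _ _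
          (RatFunc.algebraMap_ne_zero (Polynomial.X_sub_C_ne_zero _))
          (RatFunc.algebraMap_ne_zero hT0)]
        simp
  obtain ⟨R, T, hT, e⟩ := key (Finset.univ.erase A) (Finset.notMem_erase _ _)
  rw [← Finset.add_sum_erase _ _ (Finset.mem_univ A), e] at h
  have h' : rderiv f = RatFunc.C (-c A) / (RatFunc.X - RatFunc.C (A : ℂ)) +
      algebraMap (Polynomial ℂ) (RatFunc ℂ) (-R) / algebraMap (Polynomial ℂ) (RatFunc ℂ) T := by
    rw [map_neg, map_neg]
    linear_combination h
  exact neg_eq_zero.1 (residue_eq_zero hT h')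

/-! ### Partial fractions -/

/-- The `ℂ`-span of the monomials `z ^ n` and of the polar parts `(z - a) ^ (-(n + 1))`, `a ∈ S`. -/
noncomputable def parFrac (S : Finset ℂ) : Submodule ℂ (RatFunc ℂ) :=
  Submodule.span ℂ
    (Set.range (fun n : ℕ => (RatFunc.X : RatFunc ℂ) ^ n) ∪
      Set.range (fun t : {a : ℂ // a ∈ S} × ℕ => (RatFunc.X - RatFunc.C (t.1 : ℂ))⁻¹ ^ (t.2 + 1)))

lemma X_pow_mem_parFrac (S : Finset ℂ) (n : ℕ) : (RatFunc.X : RatFunc ℂ) ^ n ∈ parFrac S :=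
  Submodule.subset_span (Or.inl ⟨n, rfl⟩)

lemma inv_pow_mem_parFrac (S : Finset ℂ) {a : ℂ} (ha : a ∈ S) (n : ℕ) :
    (RatFunc.X - RatFunc.C a : RatFunc ℂ)⁻¹ ^ n ∈ parFrac S := by
  rcases n with _ | n
  · simpa using X_pow_mem_parFrac S 0
  · exact Submodule.subset_span (Or.inr ⟨(⟨a, ha⟩, n), rfl⟩)

lemma C_mul_mem {P : Submodule ℂ (RatFunc ℂ)} {f : RatFunc ℂ} (c : ℂ) (hf : f ∈ P) :
    RatFunc.C c * f ∈ P := by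
  rw [← RatFunc.smul_eq_C_mul]; exact P.smul_mem c hf

/-- Closure under multiplication by a fixed `g` may be checked on the spanning family. -/
lemma mul_mem_parFrac {S : Finset ℂ} {g : RatFunc ℂ}
    (h1 : ∀ n : ℕ, g * RatFunc.X ^ n ∈ parFrac S)
    (h2 : ∀ a ∈ S, ∀ n : ℕ, g * (RatFunc.X - RatFunc.C a)⁻¹ ^ (n + 1) ∈ parFrac S)
    {f : RatFunc ℂ} (hf : f ∈ parFrac S) : g * f ∈ parFrac S := by
  unfold parFrac at hf
  induction hf using Submodule.span_induction with
  | mem x hx =>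
    rcases hx with ⟨n, rfl⟩ | ⟨⟨A, n⟩, rfl⟩
    · exact h1 n
    · exact h2 A A.2 n
  | zero => simp
  | add x y _ _ hx hy => rw [mul_add]; exact add_mem hx hy
  | smul c x _ hx => rw [mul_smul_comm]; exact Submodule.smul_mem _ c hx

lemma X_mul_mem_parFrac {S : Finset ℂ} {f : RatFunc ℂ} (hf : f ∈ parFrac S) :
    RatFunc.X * f ∈ parFrac S := by
  refine mul_mem_parFrac (fun n => ?_) (fun a ha n => ?_) hf
  · rw [← pow_succ']; exact X_pow_mem_parFrac S _
  · have h0 := X_sub_C_ne a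
    have : (RatFunc.X : RatFunc ℂ) * (RatFunc.X - RatFunc.C a)⁻¹ ^ (n + 1) =
        (RatFunc.X - RatFunc.C a)⁻¹ ^ n +
          RatFunc.C a * (RatFunc.X - RatFunc.C a)⁻¹ ^ (n + 1) := by
      have h1 := mul_inv_cancel₀ h0
      rw [pow_succ]
      linear_combination (RatFunc.X - RatFunc.C a)⁻¹ ^ n * h1
    rw [this]
    exact add_mem (inv_pow_mem_parFrac S ha n) (C_mul_mem a (inv_pow_mem_parFrac S ha _))

lemma inv_mul_mem_parFrac {S : Finset ℂ} {a : ℂ} (ha : a ∈ S) {f : RatFunc ℂ}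
    (hf : f ∈ parFrac S) : (RatFunc.X - RatFunc.C a)⁻¹ * f ∈ parFrac S := by
  refine mul_mem_parFrac (fun n => ?_) (fun b hb n => ?_) hf
  · induction n with
    | zero => simpa using inv_pow_mem_parFrac S ha 1
    | succ n ih => rw [pow_succ', mul_left_comm]; exact X_mul_mem_parFrac ih
  · by_cases hab : a = b
    · subst hab
      rw [← pow_succ']; exact inv_pow_mem_parFrac S ha _
    · suffices H : ∀ n : ℕ, (RatFunc.X - RatFunc.C a : RatFunc ℂ)⁻¹ *
          (RatFunc.X - RatFunc.C b)⁻¹ ^ n ∈ parFrac S from H _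
      intro n
      induction n with
      | zero => simpa using inv_pow_mem_parFrac S ha 1
      | succ n ih =>
        have h1 := mul_inv_cancel₀ (X_sub_C_ne a)
        have h2 := mul_inv_cancel₀ (X_sub_C_ne b)
        have h3 : RatFunc.C (a - b)⁻¹ * (RatFunc.C a - RatFunc.C b) = (1 : RatFunc ℂ) := by
          rw [← map_sub, ← map_mul, inv_mul_cancel₀ (sub_ne_zero.2 hab), map_one]
        have : (RatFunc.X - RatFunc.C a : RatFunc ℂ)⁻¹ * (RatFunc.X - RatFunc.C b)⁻¹ ^ (n + 1) =
            RatFunc.C (a - b)⁻¹ * ((RatFunc.X - RatFunc.C a)⁻¹ * (RatFunc.X - RatFunc.C b)⁻¹ ^ n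
              - (RatFunc.X - RatFunc.C b)⁻¹ ^ (n + 1)) := by
          generalize (RatFunc.X - RatFunc.C a : RatFunc ℂ)⁻¹ = u at *
          generalize (RatFunc.X - RatFunc.C b : RatFunc ℂ)⁻¹ = v at *
          generalize RatFunc.C (a - b)⁻¹ = k at *
          rw [pow_succ]
          linear_combination (-(u * v ^ n * v)) * h3 - k * v ^ n * v * h1 + k * u * v ^ n * h2
        rw [this]
        exact C_mul_mem _ (sub_mem ih (inv_pow_mem_parFrac S hb _))

lemma ratO_le_parFrac {S : Finset ℂ} {f : RatFunc ℂ} (hf : f ∈ ratO S) : f ∈ parFrac S := by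
  unfold ratO at hf
  rw [← Subalgebra.mem_toSubmodule, Algebra.adjoin_eq_span] at hf
  refine (Submodule.span_le.2 ?_) hf
  intro x hx
  induction hx using Submonoid.closure_induction_left with
  | one => simpa using X_pow_mem_parFrac S 0
  | mul_left g hg y _ hy =>
    rcases hg with rfl | ⟨a, ha, rfl⟩
    · exact X_mul_mem_parFrac hy
    · exact inv_mul_mem_parFrac ha hy

lemma X_mem_ratO (S : Finset ℂ) : RatFunc.X ∈ ratO S :=
  Algebra.subset_adjoin (Set.mem_insert _ _)

lemma inv_mem_ratO {S : Finset ℂ} {a : ℂ} (ha : a ∈ S) :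
    (RatFunc.X - RatFunc.C a)⁻¹ ∈ ratO S :=
  Algebra.subset_adjoin (Or.inr ⟨a, ha, rfl⟩)

lemma C_mem_ratO (S : Finset ℂ) (c : ℂ) : RatFunc.C c ∈ ratO S := by
  rw [← RatFunc.algebraMap_eq_C]; exact (ratO S).algebraMap_mem c

/-- Modulo derivatives, `O_Σ` is spanned by the logarithmic forms `1/(z-a)`. -/
lemma exists_primitive_mod_log {S : Finset ℂ} {f : RatFunc ℂ} (hf : f ∈ ratO S) :
    ∃ g ∈ ratO S, ∃ c : {a : ℂ // a ∈ S} → ℂ,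
      f = rderiv g + ∑ A, RatFunc.C (c A) / (RatFunc.X - RatFunc.C (A : ℂ)) := by
  classical
  have hf' := ratO_le_parFrac hf
  clear hf
  unfold parFrac at hf'
  induction hf' using Submodule.span_induction with
  | mem x hx =>
    rcases hx with ⟨n, rfl⟩ | ⟨⟨A, n⟩, rfl⟩
    · have hn : (n : ℂ) + 1 ≠ 0 := by exact_mod_cast n.succ_ne_zero
      refine ⟨RatFunc.C ((n : ℂ) + 1)⁻¹ * RatFunc.X ^ (n + 1),
        mul_mem (C_mem_ratO S _) (pow_mem (X_mem_ratO S) _), 0, ?_⟩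
      rw [rderiv_C_mul, rderiv_X_pow, ← mul_assoc, ← map_mul, inv_mul_cancel₀ hn]
      simp
    · rcases n with _ | n
      · refine ⟨0, zero_mem _, Pi.single A 1, ?_⟩
        rw [Finset.sum_eq_single A]
        · simp [rderiv_zero]
        · intro B _ hB; simp [Pi.single_eq_of_ne hB]
        · simp
      · have hn : -((n : ℂ) + 1) ≠ 0 := neg_ne_zero.2 (by exact_mod_cast n.succ_ne_zero)
        refine ⟨RatFunc.C (-((n : ℂ) + 1))⁻¹ * (RatFunc.X - RatFunc.C (A : ℂ))⁻¹ ^ (n + 1),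
          mul_mem (C_mem_ratO S _) (pow_mem (inv_mem_ratO A.2) _), 0, ?_⟩
        rw [rderiv_C_mul, rderiv_inv_pow, ← mul_assoc, ← map_mul, inv_mul_cancel₀ hn]
        simp
  | zero => exact ⟨0, zero_mem _, 0, by simp [rderiv_zero]⟩
  | add x y _ _ hx hy =>
    obtain ⟨g, hg, c, e⟩ := hx
    obtain ⟨g', hg', c', e'⟩ := hy
    refine ⟨g + g', add_mem hg hg', c + c', ?_⟩
    rw [e, e', rderiv_add]
    simp only [Pi.add_apply, map_add, add_div, Finset.sum_add_distrib]
    ring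
  | smul k x _ hx =>
    obtain ⟨g, hg, c, e⟩ := hx
    refine ⟨RatFunc.C k * g, mul_mem (C_mem_ratO S _) hg, fun A => k * c A, ?_⟩
    rw [e, rderiv_C_mul, RatFunc.smul_eq_C_mul, mul_add, Finset.mul_sum]
    simp only [map_mul, mul_div_assoc]

/-! ### The formal derivative -/

/-- Coefficient formula for the formal derivative: the coefficient of `w` in `∂_z x` involves
only `w` itself and its one-letter extensions `wa`. -/
lemma D_apply {S : Finset ℂ} {D : Mdl S →ₗ[ℂ] Mdl S}
    (hD0 : ∀ φ : RatFunc ℂ,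
      D (Finsupp.single ([] : Word S) φ) = Finsupp.single ([] : Word S) (rderiv φ))
    (hD1 : ∀ (w : Word S) (A : {a : ℂ // a ∈ S}) (φ : RatFunc ℂ),
      D (Finsupp.single (w ++ [A]) φ)
        = Finsupp.single (w ++ [A]) (rderiv φ)
          + Finsupp.single w (φ / (RatFunc.X - RatFunc.C (A : ℂ))))
    (x : Mdl S) (w : Word S) :
    D x w = rderiv (x w) + ∑ A : {a : ℂ // a ∈ S}, x (w ++ [A]) / (RatFunc.X - RatFunc.C (A : ℂ)) := by
  classical
  induction x using Finsupp.induction_linear with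
  | zero => simp [rderiv_zero]
  | add x y hx hy =>
    rw [map_add, Finsupp.add_apply, hx, hy, Finsupp.add_apply, rderiv_add]
    simp only [Finsupp.add_apply, add_div, Finset.sum_add_distrib]
    ring
  | single u φ =>
    have hr : ∀ u : Word S, rderiv (Finsupp.single u φ w) = Finsupp.single u (rderiv φ) w := by
      intro u
      simp only [Finsupp.single_apply]
      split_ifs
      · rfl
      · exact rderiv_zero
    rcases List.eq_nil_or_concat u with rfl | ⟨v, B, rfl⟩
    · rw [hD0, hr]
      simp [Finsupp.single_apply]
    · rw [List.concat_eq_append, hD1, hr, Finsupp.add_apply]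
      congr 1
      rw [Finset.sum_eq_single B]
      · by_cases h : v = w <;> simp [h]
      · intro A _ hA
        simp [Ne.symm hA]
      · simp

/-- **Exactness of `0 → ℂ → M → M → 0`** (formal model of F. Brown's
structure theorem, part (2)): for the ℂ-linear map `∂_z` with
`∂_z(e⊗φ) = e⊗φ'` and `∂_z(wa⊗φ) = wa⊗φ' + w⊗(φ/(z−a))`, the kernel of
`∂_z` on elements with coefficients in `O_Σ` is exactly `{e⊗c : c ∈ ℂ}`,
and every `f` with coefficients in `O_Σ` has a primitive `F` with
coefficients in `O_Σ` such that `∂_z F = f`. -/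
theorem exact_sequence_hyperlog_module
    (S : Finset ℂ) (D : Mdl S →ₗ[ℂ] Mdl S)
    (hD0 : ∀ φ : RatFunc ℂ,
      D (Finsupp.single ([] : Word S) φ) = Finsupp.single ([] : Word S) (rderiv φ))
    (hD1 : ∀ (w : Word S) (A : {a : ℂ // a ∈ S}) (φ : RatFunc ℂ),
      D (Finsupp.single (w ++ [A]) φ)
        = Finsupp.single (w ++ [A]) (rderiv φ)
          + Finsupp.single w (φ / (RatFunc.X - RatFunc.C (A : ℂ)))) :
    (∀ x : Mdl S, (∀ w : Word S, x w ∈ ratO S) →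
      (D x = 0 ↔ ∃ c : ℂ, x = Finsupp.single ([] : Word S) (RatFunc.C c))) ∧
    (∀ f : Mdl S, (∀ w : Word S, f w ∈ ratO S) →
      ∃ F : Mdl S, (∀ w : Word S, F w ∈ ratO S) ∧ D F = f) := by
  classical
  refine ⟨fun x _ => ⟨fun hx => ?_, ?_⟩, fun f hf => ?_⟩
  · have hw : ∀ w : Word S,
        rderiv (x w) + ∑ A : {a : ℂ // a ∈ S}, x (w ++ [A]) / (RatFunc.X - RatFunc.C (A : ℂ)) = 0 := fun w => by
      rw [← D_apply hD0 hD1, hx, Finsupp.zero_apply]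
    -- if every longer word has coefficient zero, then the coefficient of `w` is a constant
    have hconst : ∀ n : ℕ, (∀ w : Word S, n < w.length → x w = 0) →
        ∀ w : Word S, w.length = n → ∃ c : ℂ, x w = RatFunc.C c := by
      intro n hn w hlen
      apply rderiv_eq_zero
      have h := hw w
      rwa [Finset.sum_eq_zero, add_zero] at h
      intro A _
      rw [hn _ (by simp [hlen]), zero_div]
    have hstep : ∀ n : ℕ, (∀ w : Word S, n + 1 < w.length → x w = 0) →
        ∀ w : Word S, n < w.length → x w = 0 := by
      intro n hn w hlen
      rcases Nat.lt_or_ge (n + 1) w.length with h | h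
      · exact hn w h
      rcases List.eq_nil_or_concat w with rfl | ⟨v, B, rfl⟩
      · simp at hlen
      rw [List.concat_eq_append] at *
      have hv : v.length = n := by simp at hlen h; omega
      have hc : ∀ A : {a : ℂ // a ∈ S}, ∃ c : ℂ, x (v ++ [A]) = RatFunc.C c :=
        fun A => hconst (n + 1) hn _ (by simp [hv])
      choose c hc using hc
      have h1 := hw v
      simp only [hc] at h1
      rw [hc, log_independent h1 B, map_zero]
    have hbound : ∃ N : ℕ, ∀ w : Word S, N < w.length → x w = 0 := by
      refine ⟨x.support.sup List.length, fun w hlen => ?_⟩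
      by_contra hne
      exact absurd (Finset.le_sup (f := List.length) (Finsupp.mem_support_iff.2 hne))
        (not_le.2 hlen)
    have hzero : ∀ w : Word S, 0 < w.length → x w = 0 := by
      obtain ⟨N, hN⟩ := hbound
      induction N with
      | zero => exact hN
      | succ N ih => exact ih (hstep N hN)
    obtain ⟨c, hc⟩ := hconst 0 hzero [] rfl
    refine ⟨c, Finsupp.ext fun w => ?_⟩
    rcases w with _ | ⟨A, w⟩
    · simpa using hc
    · rw [hzero _ (by simp), Finsupp.single_eq_of_ne (by simp)]
  · rintro ⟨c, rfl⟩
    rw [hD0, rderiv_C, Finsupp.single_zero]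
  · -- `M` as a `ℂ`-subspace: the finitely supported families with coefficients in `O_Σ`
    let N : Submodule ℂ (Mdl S) :=
      { carrier := {F | ∀ w, F w ∈ ratO S}
        add_mem' := fun ha hb w => add_mem (ha w) (hb w)
        zero_mem' := fun w => zero_mem _
        smul_mem' := fun c F hF w => (ratO S).smul_mem (hF w) c }
    have hN : ∀ (w : Word S) {φ : RatFunc ℂ}, φ ∈ ratO S → Finsupp.single w φ ∈ N := by
      intro w φ hφ u
      rw [Finsupp.single_apply]
      split_ifs
      · exact hφ
      · exact zero_mem _
    have key : ∀ (w : Word S) (φ : RatFunc ℂ), φ ∈ ratO S →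
        Finsupp.single w φ ∈ N.map D := by
      -- integrate the coefficient of `w` modulo logarithms, which lengthen `w` by a letter;
      -- integration by parts leaves an error term on the shorter word
      have hred : ∀ w : Word S, ∀ φ ∈ ratO S, (∀ ψ ∈ ratO S, Finsupp.single w (rderiv ψ) ∈ N.map D) →
          Finsupp.single w φ ∈ N.map D := by
        intro w φ hφ h
        obtain ⟨g, hg, c, e⟩ := exists_primitive_mod_log hφ
        rw [e, Finsupp.single_add, Finsupp.single_finsetSum]
        refine add_mem (h g hg) (sum_mem fun A _ => ?_)
        refine ⟨Finsupp.single (w ++ [A]) (RatFunc.C (c A)), hN _ (C_mem_ratO S _), ?_⟩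
        rw [hD1, rderiv_C, Finsupp.single_zero, zero_add]
      intro w
      induction w using List.reverseRecOn with
      | nil =>
        intro φ hφ
        exact hred _ φ hφ fun ψ hψ => ⟨_, hN [] hψ, hD0 ψ⟩
      | append_singleton v A ih =>
        intro φ hφ
        refine hred _ φ hφ fun ψ hψ => ?_
        have h1 : Finsupp.single (v ++ [A]) (rderiv ψ) = D (Finsupp.single (v ++ [A]) ψ) -
            Finsupp.single v (ψ / (RatFunc.X - RatFunc.C (A : ℂ))) := by
          rw [hD1, add_sub_cancel_right]
        rw [h1]
        refine sub_mem ⟨_, hN _ hψ, rfl⟩ (ih _ ?_)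
        rw [div_eq_mul_inv]
        exact mul_mem hψ (inv_mem_ratO A.2)
    have hmem : f ∈ N.map D := by
      rw [← Finsupp.sum_single f]
      exact sum_mem fun w _ => key w _ (hf w)
    obtain ⟨F, hF, e⟩ := hmem
    exact ⟨F, hF, e⟩
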